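/- arXiv:math/0703571 — 4 statements merged into one kernel-verified Lean document; each statement's English description precedes it below -/
import Mathlib

section
/- Let p ∈ ℤ and ν ∈ ℂ, and let W: (0,∞) → ℂ be twice continuously differentiable and satisfy the Whittaker-type differential equation W''(y) = ((2π)² − 4πp/y + (ν² − 1/4) y^{−2}) W(y) for all y > 0. Assume there exist C > 0 and ε > 0 such that |W(y)| + y|W'(y)| ≤ C y^{1/2+ε} for 0 < y ≤ 1 and |W(y)| + |W'(y)| ≤ C e^{−y} for y ≥ 1. Then for every s ∈ ℂ with Re s > 1, all three integrals below converge absolutely and ((s − 1/2)² − ν²) ∫₀^∞ y^{s−2} W(y) dy = 4π ( π ∫₀^∞ y^{s} W(y) dy − p ∫₀^∞ y^{s−1} W(y) dy ). -/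
/-!
The equation says that, for `y > 0`, the function `F y = y ^ s * W' y - s * y ^ (s - 1) * W y`
has derivative
`F' y = (4π² y ^ s - 4πp y ^ (s - 1) - ((s - 1/2)² - ν²) y ^ (s - 2)) * W y`:
the two terms containing `W'` cancel, and `s (s - 1) + 1/4 = (s - 1/2)²`. The growth bounds make
each of the three pieces integrable on `(0, ∞)` (they are Mellin transforms of `W` at points of
positive real part) and make `F` vanish at both ends (`tendsto_cpow_mul_zero`,
`tendsto_cpow_mul_atTop`). Hence `∫ F' = 0`, which is the claimed identity.
-/

open Complex MeasureTheory

open Filter Topology Set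

/-- A power `y ^ z` kills the behaviour `O(y ^ a)` at `0⁺` as soon as `Re z + a > 0`. -/
lemma tendsto_cpow_mul_zero {f : ℝ → ℂ} {C a : ℝ} {z : ℂ}
    (hf : ∀ y : ℝ, 0 < y → y ≤ 1 → ‖f y‖ ≤ C * y ^ a) (hz : 0 < z.re + a) :
    Tendsto (fun y : ℝ => (y : ℂ) ^ z * f y) (𝓝[>] 0) (𝓝 0) := by
  have h0 : Tendsto (fun y : ℝ => C * y ^ (z.re + a)) (𝓝[>] 0) (𝓝 0) := by
    have h := ((Real.continuousAt_rpow_const 0 (z.re + a) (Or.inr hz.le)).tendsto.const_mul C)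
    rw [Real.zero_rpow hz.ne', mul_zero] at h
    exact h.mono_left nhdsWithin_le_nhds
  refine squeeze_zero_norm' ?_ h0
  filter_upwards [Ioc_mem_nhdsGT (zero_lt_one' ℝ)] with y hy
  rw [norm_mul, norm_cpow_eq_rpow_re_of_pos hy.1, Real.rpow_add hy.1]
  calc y ^ z.re * ‖f y‖ ≤ y ^ z.re * (C * y ^ a) :=
        mul_le_mul_of_nonneg_left (hf y hy.1 hy.2) (Real.rpow_nonneg hy.1.le _)
    _ = _ := by ring

lemma tendsto_cpow_mul_atTop {f : ℝ → ℂ} {C : ℝ} {z : ℂ}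
    (hf : ∀ y : ℝ, 1 ≤ y → ‖f y‖ ≤ C * Real.exp (-y)) :
    Tendsto (fun y : ℝ => (y : ℂ) ^ z * f y) atTop (𝓝 0) := by
  have h0 : Tendsto (fun y : ℝ => C * (y ^ z.re * Real.exp (-1 * y))) atTop (𝓝 0) := by
    simpa using (tendsto_rpow_mul_exp_neg_mul_atTop_nhds_zero z.re 1 one_pos).const_mul C
  refine squeeze_zero_norm' ?_ h0
  filter_upwards [eventually_ge_atTop 1] with y hy
  have hy0 : 0 < y := one_pos.trans_le hy
  rw [norm_mul, norm_cpow_eq_rpow_re_of_pos hy0, neg_one_mul]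
  calc y ^ z.re * ‖f y‖ ≤ y ^ z.re * (C * Real.exp (-y)) :=
        mul_le_mul_of_nonneg_left (hf y hy) (Real.rpow_nonneg hy0.le _)
    _ = _ := by ring

lemma hasDerivAt_ofReal_cpow_pos (z : ℂ) {y : ℝ} (hy : 0 < y) :
    HasDerivAt (fun x : ℝ => (x : ℂ) ^ z) (z * (y : ℂ) ^ (z - 1)) y := by
  have h : HasDerivAt (fun x : ℂ => x ^ z) (z * (y : ℂ) ^ (z - 1) * 1) (y : ℂ) :=
    (hasDerivAt_id (y : ℂ)).cpow_const (Or.inl (by simpa using hy))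
  simpa using h.comp_ofReal

theorem stmt4 (p : ℤ) (ν : ℂ) (W W' W'' : ℝ → ℂ)
    -- `W` is twice continuously differentiable on `(0,∞)`
    (hW1 : ∀ y ∈ Set.Ioi (0 : ℝ), HasDerivAt W (W' y) y)
    (hW2 : ∀ y ∈ Set.Ioi (0 : ℝ), HasDerivAt W' (W'' y) y)
    (hW2c : ContinuousOn W'' (Set.Ioi (0 : ℝ)))
    -- Whittaker-type differential equation
    (hode : ∀ y : ℝ, 0 < y → W'' y =
      ((((2 * Real.pi) ^ 2 : ℝ) : ℂ) - 4 * (Real.pi : ℂ) * (p : ℂ) / (y : ℂ) +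
        (ν ^ 2 - 1 / 4) * (y : ℂ) ^ (-2 : ℤ)) * W y)
    -- growth bounds
    (C : ℝ) (hC : 0 < C) (ε : ℝ) (hε : 0 < ε)
    (hsmall : ∀ y : ℝ, 0 < y → y ≤ 1 →
      ‖W y‖ + y * ‖W' y‖ ≤ C * y ^ ((1 : ℝ) / 2 + ε))
    (hlarge : ∀ y : ℝ, 1 ≤ y → ‖W y‖ + ‖W' y‖ ≤ C * Real.exp (-y))
    (s : ℂ) (hs : 1 < s.re) :
    IntegrableOn (fun y : ℝ => (y : ℂ) ^ (s - 2) * W y) (Set.Ioi 0) ∧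
    IntegrableOn (fun y : ℝ => (y : ℂ) ^ s * W y) (Set.Ioi 0) ∧
    IntegrableOn (fun y : ℝ => (y : ℂ) ^ (s - 1) * W y) (Set.Ioi 0) ∧
    ((s - 1 / 2) ^ 2 - ν ^ 2) * ∫ y in Set.Ioi (0 : ℝ), (y : ℂ) ^ (s - 2) * W y =
      4 * (Real.pi : ℂ) *
        ((Real.pi : ℂ) * (∫ y in Set.Ioi (0 : ℝ), (y : ℂ) ^ s * W y) -
          (p : ℂ) * ∫ y in Set.Ioi (0 : ℝ), (y : ℂ) ^ (s - 1) * W y) := by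
  have hWs : ∀ y : ℝ, 0 < y → y ≤ 1 → ‖W y‖ ≤ C * y ^ ((1 : ℝ) / 2 + ε) := fun y h0 h1 =>
    (le_add_of_nonneg_right (by positivity)).trans (hsmall y h0 h1)
  have hW's : ∀ y : ℝ, 0 < y → y ≤ 1 → ‖W' y‖ ≤ C * y ^ ((1 : ℝ) / 2 + ε - 1) := by
    intro y h0 h1
    have h : y * ‖W' y‖ ≤ C * y ^ ((1 : ℝ) / 2 + ε) :=
      (le_add_of_nonneg_left (norm_nonneg _)).trans (hsmall y h0 h1)
    rw [Real.rpow_sub_one h0.ne', ← mul_div_assoc, le_div_iff₀ h0]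
    linarith
  have hWl : ∀ y : ℝ, 1 ≤ y → ‖W y‖ ≤ C * Real.exp (-y) := fun y h1 =>
    (le_add_of_nonneg_right (norm_nonneg _)).trans (hlarge y h1)
  have hW'l : ∀ y : ℝ, 1 ≤ y → ‖W' y‖ ≤ C * Real.exp (-y) := fun y h1 =>
    (le_add_of_nonneg_left (norm_nonneg _)).trans (hlarge y h1)
  have hWc : ContinuousOn W (Ioi 0) := fun y hy => (hW1 y hy).continuousAt.continuousWithinAt
  have hmellin : ∀ z : ℂ, 0 < z.re →
      IntegrableOn (fun y : ℝ => (y : ℂ) ^ (z - 1) * W y) (Ioi 0) := by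
    intro z hz
    refine mellinConvergent_of_isBigO_rpow_exp (a := 1) (b := -((1 : ℝ) / 2 + ε)) one_pos
      (hWc.locallyIntegrableOn measurableSet_Ioi) ?_ ?_ (by linarith)
    · refine Asymptotics.IsBigO.of_bound C ?_
      filter_upwards [eventually_ge_atTop 1] with y hy
      rw [Real.norm_of_nonneg (Real.exp_pos _).le, neg_one_mul]
      exact hWl y hy
    · refine Asymptotics.IsBigO.of_bound C ?_
      filter_upwards [Ioc_mem_nhdsGT (zero_lt_one' ℝ)] with y hy
      rw [neg_neg, Real.norm_of_nonneg (Real.rpow_nonneg hy.1.le _)]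
      exact hWs y hy.1 hy.2
  have i2 : IntegrableOn (fun y : ℝ => (y : ℂ) ^ (s - 2) * W y) (Ioi 0) := by
    have h := hmellin (s - 1) (by simp only [sub_re, one_re]; linarith)
    rwa [show s - 1 - 1 = s - 2 by ring] at h
  have i0 : IntegrableOn (fun y : ℝ => (y : ℂ) ^ s * W y) (Ioi 0) := by
    have h := hmellin (s + 1) (by simp only [add_re, one_re]; linarith)
    rwa [show s + 1 - 1 = s by ring] at h
  have i1 : IntegrableOn (fun y : ℝ => (y : ℂ) ^ (s - 1) * W y) (Ioi 0) :=
    hmellin s (by linarith)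
  refine ⟨i2, i0, i1, ?_⟩
  let F : ℝ → ℂ := fun y => (y : ℂ) ^ s * W' y - s * ((y : ℂ) ^ (s - 1) * W y)
  let G : ℝ → ℂ := fun y => (4 * (Real.pi : ℂ) ^ 2) * ((y : ℂ) ^ s * W y)
    - (4 * (Real.pi : ℂ) * p) * ((y : ℂ) ^ (s - 1) * W y)
    - ((s - 1 / 2) ^ 2 - ν ^ 2) * ((y : ℂ) ^ (s - 2) * W y)
  have hFG : ∀ y ∈ Ioi (0 : ℝ), HasDerivAt F (G y) y := by
    intro y hy
    have hy0 : (y : ℂ) ≠ 0 := by exact_mod_cast (ne_of_gt hy)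
    have h := ((hasDerivAt_ofReal_cpow_pos s hy).mul (hW2 y hy)).sub
      (((hasDerivAt_ofReal_cpow_pos (s - 1) hy).mul (hW1 y hy)).const_mul s)
    refine h.congr_deriv ?_
    -- all powers are expressed through `y ^ (s - 2)`
    have e1 : (y : ℂ) ^ (s - 1) = (y : ℂ) ^ (s - 2) * y := by
      rw [show s - 1 = (s - 2) + 1 by ring, cpow_add _ _ hy0, cpow_one]
    have e0 : (y : ℂ) ^ s = (y : ℂ) ^ (s - 2) * y ^ 2 := by
      conv_lhs => rw [show s = (s - 2) + (2 : ℕ) by push_cast; ring]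
      rw [cpow_add _ _ hy0, cpow_natCast]
    have e2 : (y : ℂ) ^ (s - 1 - 1) = (y : ℂ) ^ (s - 2) := by ring_nf
    have e3 : (y : ℂ) ^ (-2 : ℤ) = ((y : ℂ) ^ 2)⁻¹ := by
      rw [zpow_neg]; norm_cast
    simp only [G]
    rw [hode y hy, e2, e0, e1, e3]
    push_cast
    field_simp
    ring
  have hF0 : Tendsto F (𝓝[>] 0) (𝓝 0) := by
    have hA := tendsto_cpow_mul_zero (z := s) hW's (by linarith)
    have hB := tendsto_cpow_mul_zero (z := s - 1) hWs
      (by simp only [sub_re, one_re]; linarith)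
    simpa using hA.sub (hB.const_mul s)
  have hFtop : Tendsto F atTop (𝓝 0) := by
    have hA := tendsto_cpow_mul_atTop (z := s) hW'l
    have hB := tendsto_cpow_mul_atTop (z := s - 1) hWl
    simpa using hA.sub (hB.const_mul s)
  -- `F` vanishes at the endpoint, since `0 ^ s = 0 ^ (s - 1) = 0` for `Re s > 1`
  have hFz : F 0 = 0 := by
    have h1 : s ≠ 0 := by rintro rfl; simp at hs; linarith
    have h2 : s - 1 ≠ 0 := by
      intro h; rw [sub_eq_zero.mp h] at hs; simp at hs
    simp [F, zero_cpow h1, zero_cpow h2]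
  have hcont : ContinuousWithinAt F (Ici 0) 0 := by
    rw [← continuousWithinAt_Ioi_iff_Ici, ContinuousWithinAt, hFz]
    exact hF0
  have j0 := i0.const_mul (4 * (Real.pi : ℂ) ^ 2)
  have j1 := i1.const_mul (4 * (Real.pi : ℂ) * p)
  have j2 := i2.const_mul ((s - 1 / 2) ^ 2 - ν ^ 2)
  have key := integral_Ioi_of_hasDerivAt_of_tendsto hcont hFG ((j0.sub j1).sub j2) hFtop
  have hsplit : ∫ y in Ioi (0 : ℝ), G y =
      (4 * (Real.pi : ℂ) ^ 2) * (∫ y in Ioi (0 : ℝ), (y : ℂ) ^ s * W y)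
      - (4 * (Real.pi : ℂ) * p) * (∫ y in Ioi (0 : ℝ), (y : ℂ) ^ (s - 1) * W y)
      - ((s - 1 / 2) ^ 2 - ν ^ 2) * ∫ y in Ioi (0 : ℝ), (y : ℂ) ^ (s - 2) * W y := by
    rw [← integral_const_mul, ← integral_const_mul, ← integral_const_mul,
      ← integral_sub j0 j1]
    exact integral_sub (j0.sub j1) j2
  rw [hsplit, hFz] at key
  linear_combination -key
end

section
/- Fix u, v ∈ ℂ and a positive integer α. The function s ↦ g*(s; u, v), which is holomorphic on the half-plane Re s > 0, satisfies: there exists an entire function G: ℂ → ℂ such that G(s) = g*(s; u, v)/Γ(s) for all s with Re s > 0 (Γ the complex Gamma function). In particular g*(s; u, v) extends meromorphically to ℂ with at most simple poles, located at the non-positive integers. -/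
/-!
The function `g̃` is smooth on `(-1, 1)` (`contDiffOn_gtilde`), since `ĝ` is smooth: all moments of
`g` on the real line are integrable. It is also bounded on `(0, 1)` (`norm_gtilde_le`): shifting the
contour in the Fourier integral shows that `ĝ(ξ)` decays faster than any exponential `e^{-Aξ}`
(`norm_fhat_le`), and at `ξ = log((1+x)/(1-x))` this beats every power of `1 - x`.

For any such function the Mellin transform over `(0, 1)` continues by Taylor expansion at `0`.
Subtracting the Taylor polynomial of degree `< n` leaves an `O(x ^ n)` remainder, whose transform is
holomorphic on `Re s > -n`; the monomial `x ^ k` has transform `1 / (s + k)`, and its pole is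
cancelled by the zero of `1 / Γ` at `-k` (`exists_extension`). Letting `n` grow and gluing with the
identity theorem (`exists_entire_of_extensions`) gives the entire function `G`.
-/


open Complex MeasureTheory

/-- Fourier transform `ĝ(ξ) = ∫_ℝ g(t) e^{−iξt} dt`. -/
noncomputable def fhat (g : ℂ → ℂ) (ξ : ℝ) : ℂ :=
  ∫ t : ℝ, g t * Complex.exp (-(Complex.I * ξ * t))

/-- `g̃(x; u, v) = 2^{u+v+2α} ĝ(log((1+x)/(1−x))) (1−x)^{−(u+α)} (1+x)^{−(v+α)}`. -/
noncomputable def gtilde (g : ℂ → ℂ) (α : ℕ) (x : ℝ) (u v : ℂ) : ℂ :=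
  (2 : ℂ) ^ (u + v + 2 * (α : ℂ)) * fhat g (Real.log ((1 + x) / (1 - x))) *
    ((1 - x : ℝ) : ℂ) ^ (-(u + (α : ℂ))) * ((1 + x : ℝ) : ℂ) ^ (-(v + (α : ℂ)))

/-- Mellin transform `g*(s; u, v) = ∫₀¹ x^{s−1} g̃(x; u, v) dx`. -/
noncomputable def gstar (g : ℂ → ℂ) (α : ℕ) (s u v : ℂ) : ℂ :=
  ∫ x in Set.Ioo (0 : ℝ) 1, (x : ℂ) ^ (s - 1) * gtilde g α x u v

section Helpers

open Set Filter Topology Asymptotics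

/-! ### The Fourier transform: smoothness and exponential decay -/

/-- The decay hypothesis in a form dominated by the integrable function `1 / (1 + t ^ 2)`, with room for
a moment of order `n`. -/
lemma norm_le_strip {g : ℂ → ℂ}
    (hgdecay : ∀ A > (0 : ℝ), ∀ N : ℕ, ∃ C : ℝ, ∀ z : ℂ, |z.im| ≤ A →
      (1 + |z.re|) ^ N * ‖g z‖ ≤ C) {A : ℝ} (hA : 0 < A) (n : ℕ) :
    ∃ C : ℝ, 0 ≤ C ∧ ∀ z : ℂ, |z.im| ≤ A →
      ‖z.re‖ ^ n * ‖g z‖ ≤ C * (1 + z.re ^ 2)⁻¹ := by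
  obtain ⟨C, hC⟩ := hgdecay A hA (n + 2)
  refine ⟨C, le_trans (by positivity) (hC 0 (by simpa using hA.le)), fun z hz => ?_⟩
  have h := hC z hz
  rw [← div_eq_mul_inv, le_div_iff₀ (by positivity)]
  refine le_trans ?_ h
  have h1 : ‖z.re‖ ^ n ≤ (1 + |z.re|) ^ n := by
    rw [Real.norm_eq_abs]
    exact pow_le_pow_left₀ (abs_nonneg _) (by linarith) _
  have h2 : 1 + z.re ^ 2 ≤ (1 + |z.re|) ^ 2 := by
    nlinarith [abs_nonneg z.re, sq_abs z.re]
  calc ‖z.re‖ ^ n * ‖g z‖ * (1 + z.re ^ 2) = ‖z.re‖ ^ n * (1 + z.re ^ 2) * ‖g z‖ := by ring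
    _ ≤ (1 + |z.re|) ^ n * (1 + |z.re|) ^ 2 * ‖g z‖ := by gcongr
    _ = _ := by ring

/-- Only decay on the real line is used: every moment of `g` is integrable. -/
lemma contDiff_fhat {g : ℂ → ℂ} (hg : Differentiable ℂ g)
    (hgdecay : ∀ A > (0 : ℝ), ∀ N : ℕ, ∃ C : ℝ, ∀ z : ℂ, |z.im| ≤ A →
      (1 + |z.re|) ^ N * ‖g z‖ ≤ C) (m : ℕ) : ContDiff ℝ m (fhat g) := by
  have h1 : ContDiff ℝ ((m : ℕ∞) : WithTop ℕ∞)
      (FourierTransform.fourier (fun t : ℝ => g t)) := by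
    refine Real.contDiff_fourier fun n _ => ?_
    obtain ⟨C, -, hC⟩ := norm_le_strip hgdecay one_pos n
    refine (integrable_inv_one_add_sq.const_mul C).mono'
      (Continuous.aestronglyMeasurable ?_) (Eventually.of_forall fun t => ?_)
    · exact (continuous_norm.pow n).mul (hg.continuous.comp continuous_ofReal).norm
    · rw [Real.norm_of_nonneg (by positivity)]
      simpa using hC t (by simp)
  -- Mathlib's transform has kernel `e^{-2πitξ}`, hence the rescaling.
  have h2 : fhat g = fun ξ : ℝ =>
      (FourierTransform.fourier (fun t : ℝ => g t)) (ξ / (2 * Real.pi)) := by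
    ext ξ
    rw [Real.fourier_real_eq_integral_exp_smul, fhat]
    congr 1 with t
    rw [smul_eq_mul, mul_comm]
    congr 2
    push_cast
    have : (Real.pi : ℂ) ≠ 0 := by exact_mod_cast Real.pi_ne_zero
    field_simp
  rw [h2]
  exact h1.comp (contDiff_id.div_const _)

/-- Contour shift from `ℝ` down to `ℝ - iA`: Cauchy's theorem on the rectangles
`[-T, T] × [-A, 0]`, whose vertical sides contribute `O(T⁻²)`. -/
lemma integral_shift {h : ℂ → ℂ} (hh : Differentiable ℂ h) {A C : ℝ} (hA : 0 ≤ A)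
    (hC : ∀ z : ℂ, z.im ∈ Icc (-A) 0 → ‖h z‖ ≤ C * (1 + z.re ^ 2)⁻¹) :
    ∫ t : ℝ, h t = ∫ t : ℝ, h (t + (-A : ℝ) * I) := by
  have hint : ∀ y ∈ Icc (-A) 0, Integrable (fun t : ℝ => h (t + (y : ℝ) * I)) := by
    intro y hy
    refine (integrable_inv_one_add_sq.const_mul C).mono'
      (hh.continuous.comp (by fun_prop)).aestronglyMeasurable (Eventually.of_forall fun t => ?_)
    simpa using hC (t + y * I) (by simpa using hy)
  have hlim : ∀ y ∈ Icc (-A) 0, Tendsto (fun T : ℝ => ∫ t in (-T)..T, h (t + (y : ℝ) * I)) atTop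
      (𝓝 (∫ t : ℝ, h (t + (y : ℝ) * I))) := fun y hy =>
    intervalIntegral_tendsto_integral (hint y hy) tendsto_neg_atTop_atBot tendsto_id
  have hside : ∀ σ : ℝ → ℝ, (∀ T, σ T ^ 2 = T ^ 2) →
      Tendsto (fun T : ℝ => I • ∫ y in (-A)..0, h ((σ T : ℝ) + y * I)) atTop (𝓝 0) := by
    intro σ hσ
    have hb : ∀ T : ℝ, ‖I • ∫ y in (-A)..0, h ((σ T : ℝ) + y * I)‖ ≤ C * (1 + T ^ 2)⁻¹ * A := by
      intro T
      rw [norm_smul, norm_I, one_mul]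
      refine (intervalIntegral.norm_integral_le_of_norm_le_const (C := C * (1 + T ^ 2)⁻¹)
        fun y hy => ?_).trans (by simp [abs_of_nonneg hA])
      rw [uIoc_of_le (by linarith)] at hy
      simpa [hσ] using hC ((σ T : ℝ) + y * I) (by simpa using ⟨hy.1.le, hy.2⟩)
    refine squeeze_zero_norm hb ?_
    have : Tendsto (fun T : ℝ => (1 + T ^ 2)⁻¹) atTop (𝓝 0) :=
      tendsto_inv_atTop_zero.comp
        (tendsto_atTop_add_const_left _ _ (tendsto_pow_atTop (by norm_num)))
    simpa using (this.const_mul C).mul_const A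
  have hrect : ∀ T : ℝ, (∫ t in (-T)..T, h (t + (-A : ℝ) * I)) -
      (∫ t in (-T)..T, h (t + (0 : ℝ) * I)) + I • (∫ y in (-A)..0, h ((T : ℝ) + y * I)) -
      I • (∫ y in (-A)..0, h ((-T : ℝ) + y * I)) = 0 := by
    intro T
    have := integral_boundary_rect_eq_zero_of_differentiableOn h (⟨-T, -A⟩ : ℂ) (⟨T, 0⟩ : ℂ)
      hh.differentiableOn
    simpa using this
  have hL := (((hlim (-A) ⟨le_rfl, by linarith⟩).sub (hlim 0 ⟨by linarith, le_rfl⟩)).add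
    (hside (fun T => T) (fun _ => rfl))).sub (hside (fun T => -T) (fun T => by simp))
  have h0 := tendsto_nhds_unique (hL.congr fun T => hrect T) tendsto_const_nhds
  simp only [ofReal_zero, zero_mul, add_zero, sub_zero] at h0
  exact (sub_eq_zero.mp h0).symm

/-- Exponential decay of `ĝ` at every rate. Since only `ξ ≥ 0` is needed, the contour moves down, where
`|e^{-iξz}| = e^{ξ Im z}` is at most `1` and equals `e^{-Aξ}` on the final line. -/
lemma norm_fhat_le {g : ℂ → ℂ} (hg : Differentiable ℂ g)
    (hgdecay : ∀ A > (0 : ℝ), ∀ N : ℕ, ∃ C : ℝ, ∀ z : ℂ, |z.im| ≤ A →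
      (1 + |z.re|) ^ N * ‖g z‖ ≤ C) {A : ℝ} (hA : 0 < A) :
    ∃ C : ℝ, 0 ≤ C ∧ ∀ ξ : ℝ, 0 ≤ ξ → ‖fhat g ξ‖ ≤ C * Real.exp (-(A * ξ)) := by
  obtain ⟨C, hC0, hC⟩ := norm_le_strip hgdecay hA 0
  simp only [pow_zero, one_mul] at hC
  refine ⟨∫ t : ℝ, C * (1 + t ^ 2)⁻¹, integral_nonneg fun t => by positivity, fun ξ hξ => ?_⟩
  have hnorm : ∀ z : ℂ, ‖g z * Complex.exp (-(I * ξ * z))‖ = ‖g z‖ * Real.exp (ξ * z.im) := by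
    intro z
    rw [norm_mul, Complex.norm_exp]
    simp
  have hshift := integral_shift (h := fun z => g z * Complex.exp (-(I * ξ * z)))
    (by fun_prop) hA.le (C := C) (fun z hz => by
      rw [hnorm]
      have h1 : Real.exp (ξ * z.im) ≤ 1 :=
        Real.exp_le_one_iff.mpr (mul_nonpos_of_nonneg_of_nonpos hξ hz.2)
      refine (mul_le_of_le_one_right (norm_nonneg _) h1).trans (hC z ?_)
      rw [abs_le]
      exact ⟨hz.1, hz.2.trans hA.le⟩)
  rw [fhat, hshift, ← integral_mul_const]
  refine norm_integral_le_of_norm_le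
    ((integrable_inv_one_add_sq.const_mul C).mul_const _) (Eventually.of_forall fun t => ?_)
  rw [hnorm]
  have h2 := hC (t + (-A : ℝ) * I) (by simp [abs_of_pos hA])
  simp only [add_re, ofReal_re, mul_re, I_re, mul_zero, ofReal_im, I_im, mul_one, sub_self,
    add_zero] at h2
  have h3 : ξ * ((t : ℂ) + (-A : ℝ) * I).im = -(A * ξ) := by simp; ring
  rw [h3]
  gcongr

/-! ### Regularity of `g̃` -/

lemma contDiffOn_gtilde {g : ℂ → ℂ} (hg : Differentiable ℂ g)
    (hgdecay : ∀ A > (0 : ℝ), ∀ N : ℕ, ∃ C : ℝ, ∀ z : ℂ, |z.im| ≤ A →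
      (1 + |z.re|) ^ N * ‖g z‖ ≤ C) (α : ℕ) (u v : ℂ) (m : ℕ) :
    ContDiffOn ℝ m (fun x => gtilde g α x u v) (Ioo (-1) 1) := by
  have hpow : ∀ (c : ℂ) (l : ℝ → ℝ), ContDiff ℝ m l → (∀ x ∈ Ioo (-1 : ℝ) 1, 0 < l x) →
      ContDiffOn ℝ m (fun x => ((l x : ℝ) : ℂ) ^ c) (Ioo (-1) 1) := by
    intro c l hl hpos
    have h1 : ContDiffOn ℝ m (fun x => Complex.exp ((Real.log (l x) : ℝ) * c)) (Ioo (-1) 1) :=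
      ((ofRealCLM.contDiff.comp_contDiffOn
        (hl.contDiffOn.log fun x hx => (hpos x hx).ne')).mul contDiffOn_const).cexp
    refine h1.congr fun x hx => ?_
    rw [cpow_def_of_ne_zero (by exact_mod_cast (hpos x hx).ne'), ofReal_log (hpos x hx).le]
  have hlog : ContDiffOn ℝ m (fun x : ℝ => Real.log ((1 + x) / (1 - x))) (Ioo (-1) 1) := by
    refine ContDiffOn.log (ContDiffOn.div (by fun_prop) (by fun_prop) ?_) ?_
    · intro x hx; linarith [hx.2]
    · intro x hx
      exact (div_pos (by linarith [hx.1]) (by linarith [hx.2])).ne'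
  exact ((contDiffOn_const.mul ((contDiff_fhat hg hgdecay m).comp_contDiffOn hlog)).mul
    (hpow _ _ (by fun_prop) fun x hx => by linarith [hx.2])).mul
    (hpow _ _ (by fun_prop) fun x hx => by linarith [hx.1])

/-- Boundedness of `g̃` on `(0, 1)`: decay of `ĝ` at a large rate `A` gives a factor
`((1 - x) / (1 + x)) ^ A`, which absorbs the possible singularity `(1 - x) ^ (-(u + α))` at `x = 1`. -/
lemma norm_gtilde_le {g : ℂ → ℂ} (hg : Differentiable ℂ g)
    (hgdecay : ∀ A > (0 : ℝ), ∀ N : ℕ, ∃ C : ℝ, ∀ z : ℂ, |z.im| ≤ A →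
      (1 + |z.re|) ^ N * ‖g z‖ ≤ C) (α : ℕ) (u v : ℂ) :
    ∃ B : ℝ, ∀ x ∈ Ioo (0 : ℝ) 1, ‖gtilde g α x u v‖ ≤ B := by
  -- Large enough that `A - Re u - α ≥ 0` and `-A - Re v - α ≤ 0`.
  set A : ℝ := |u.re| + |v.re| + α + 1 with hAdef
  have hA : 0 < A := by positivity
  obtain ⟨C, hC0, hC⟩ := norm_fhat_le hg hgdecay hA
  refine ⟨‖(2 : ℂ) ^ (u + v + 2 * (α : ℂ))‖ * C, fun x hx => ?_⟩
  have hm : 0 < 1 - x := by linarith [hx.2]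
  have hp : 0 < 1 + x := by linarith [hx.1]
  have h1 := hC (Real.log ((1 + x) / (1 - x)))
    (Real.log_nonneg ((one_le_div hm).mpr (by linarith [hx.1])))
  have h2 : Real.exp (-(A * Real.log ((1 + x) / (1 - x)))) = (1 - x) ^ A * (1 + x) ^ (-A) := by
    rw [Real.rpow_def_of_pos hm, Real.rpow_def_of_pos hp, ← Real.exp_add,
      Real.log_div hp.ne' hm.ne']
    ring_nf
  rw [h2] at h1
  rw [gtilde, norm_mul, norm_mul, norm_mul, norm_cpow_eq_rpow_re_of_pos hm,
    norm_cpow_eq_rpow_re_of_pos hp]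
  have hure : (-(u + (α : ℂ))).re = -(u.re + α) := by simp
  have hvre : (-(v + (α : ℂ))).re = -(v.re + α) := by simp
  rw [hure, hvre]
  have h3 : (1 - x) ^ A * (1 - x) ^ (-(u.re + α)) ≤ 1 := by
    rw [← Real.rpow_add hm]
    refine Real.rpow_le_one hm.le (by linarith [hx.1]) ?_
    linarith [le_abs_self u.re, abs_nonneg v.re]
  have h4 : (1 + x) ^ (-A) * (1 + x) ^ (-(v.re + α)) ≤ 1 := by
    rw [← Real.rpow_add hp]
    refine Real.rpow_le_one_of_one_le_of_nonpos (by linarith [hx.1]) ?_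
    have : (0 : ℝ) ≤ α := by positivity
    linarith [neg_abs_le v.re, abs_nonneg u.re]
  calc _ ≤ ‖(2 : ℂ) ^ (u + v + 2 * (α : ℂ))‖ * (C * ((1 - x) ^ A * (1 + x) ^ (-A))) *
        (1 - x) ^ (-(u.re + α)) * (1 + x) ^ (-(v.re + α)) := by gcongr
    _ = ‖(2 : ℂ) ^ (u + v + 2 * (α : ℂ))‖ * C * (((1 - x) ^ A * (1 - x) ^ (-(u.re + α))) *
        ((1 + x) ^ (-A) * (1 + x) ^ (-(v.re + α)))) := by ring
    _ ≤ ‖(2 : ℂ) ^ (u + v + 2 * (α : ℂ))‖ * C * 1 := by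
        gcongr
        exact mul_le_one₀ h3 (by positivity) h4
    _ = _ := mul_one _

/-! ### Mellin transforms on the unit interval -/

/-- Taylor expansion at `0` with a remainder bound on all of `(0, 1)`. Taylor's theorem gives it on
`(0, 1/2]`; on `(1/2, 1)` both `f` and the polynomial are bounded, and `1 ≤ (2x) ^ n`. -/
lemma exists_taylor_bound {f : ℝ → ℂ} (hf : ∀ m : ℕ, ContDiffOn ℝ m f (Ioo (-1) 1)) {B : ℝ}
    (hB : ∀ x ∈ Ioo (0 : ℝ) 1, ‖f x‖ ≤ B) (n : ℕ) :
    ∃ (a : ℕ → ℂ) (C : ℝ), ∀ x ∈ Ioo (0 : ℝ) 1,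
      ‖f x - ∑ k ∈ Finset.range n, a k * (x : ℂ) ^ k‖ ≤ C * x ^ n := by
  rcases n with _ | n
  · exact ⟨0, B, fun x hx => by simpa using hB x hx⟩
  obtain ⟨C, hC⟩ := exists_taylor_mean_remainder_bound (f := f) (n := n)
    (show (0 : ℝ) ≤ 1 / 2 by norm_num)
    (by exact_mod_cast (hf (n + 1)).mono fun x hx => ⟨by linarith [hx.1], by linarith [hx.2]⟩)
  let a : ℕ → ℂ := fun k =>
    (((k.factorial : ℝ)⁻¹ : ℝ) : ℂ) * iteratedDerivWithin k f (Icc 0 (1 / 2)) 0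
  have hT : ∀ x : ℝ, taylorWithinEval f n (Icc 0 (1 / 2)) 0 x =
      ∑ k ∈ Finset.range (n + 1), a k * (x : ℂ) ^ k := by
    intro x
    rw [taylor_within_apply]
    refine Finset.sum_congr rfl fun k _ => ?_
    simp only [a, real_smul, sub_zero]
    push_cast
    ring
  set S : ℝ := ∑ k ∈ Finset.range (n + 1), ‖a k‖ with hS
  have hS0 : 0 ≤ S := Finset.sum_nonneg fun _ _ => norm_nonneg _
  have hB0 : 0 ≤ B := (norm_nonneg _).trans (hB (1 / 2) (by norm_num))
  refine ⟨a, max C ((B + S) * 2 ^ (n + 1)), fun x hx => ?_⟩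
  have hx0 : 0 ≤ x := hx.1.le
  rcases le_or_gt x (1 / 2) with h | h
  · have := hC x ⟨hx0, h⟩
    rw [hT, sub_zero] at this
    refine this.trans ?_
    gcongr
    exact le_max_left _ _
  · have h1 : ‖f x - ∑ k ∈ Finset.range (n + 1), a k * (x : ℂ) ^ k‖ ≤ B + S := by
      refine (norm_sub_le _ _).trans (add_le_add (hB x hx) ((norm_sum_le _ _).trans ?_))
      refine Finset.sum_le_sum fun k _ => ?_
      rw [norm_mul, norm_pow, norm_real, Real.norm_of_nonneg hx0]
      exact mul_le_of_le_one_right (norm_nonneg _) (pow_le_one₀ hx0 hx.2.le)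
    have h2 : 1 ≤ 2 ^ (n + 1) * x ^ (n + 1) := by
      rw [← mul_pow]
      exact one_le_pow₀ (by linarith)
    calc _ ≤ (B + S) * 1 := by rw [mul_one]; exact h1
      _ ≤ (B + S) * (2 ^ (n + 1) * x ^ (n + 1)) := by gcongr
      _ = (B + S) * 2 ^ (n + 1) * x ^ (n + 1) := by ring
      _ ≤ _ := by gcongr; exact le_max_right _ _

/-- A function on `(0, 1)` which is `O(x ^ n)` has a Mellin transform that converges and is holomorphic
on `Re s > -n`. -/
lemma mellin_Ioo_of_bound {r : ℝ → ℂ} (hr : ContinuousOn r (Ioo 0 1)) {C : ℝ} {n : ℕ}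
    (hC : ∀ x ∈ Ioo (0 : ℝ) 1, ‖r x‖ ≤ C * x ^ n) {s : ℂ} (hs : -(n : ℝ) < s.re) :
    IntegrableOn (fun x : ℝ => (x : ℂ) ^ (s - 1) * r x) (Ioo 0 1) ∧
    DifferentiableAt ℂ (fun s : ℂ => ∫ x in Ioo (0 : ℝ) 1, (x : ℂ) ^ (s - 1) * r x) s := by
  set F : ℝ → ℂ := (Ioo (0 : ℝ) 1).indicator r with hF
  have hFint : Integrable F := by
    rw [hF, integrable_indicator_iff measurableSet_Ioo]
    refine Integrable.mono' (g := fun _ => |C|)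
      (by simp) (hr.aestronglyMeasurable measurableSet_Ioo)
      ((ae_restrict_iff' measurableSet_Ioo).mpr (Eventually.of_forall fun x hx => ?_))
    refine (hC x hx).trans ?_
    calc C * x ^ n ≤ |C| * x ^ n := by
          have := pow_nonneg hx.1.le n
          gcongr
          exact le_abs_self C
      _ ≤ |C| := mul_le_of_le_one_right (abs_nonneg _) (pow_le_one₀ hx.1.le hx.2.le)
  have hloc : LocallyIntegrableOn F (Ioi 0) := hFint.locallyIntegrable.locallyIntegrableOn _
  -- `F` vanishes for large `x`, so any exponent beyond `s.re` will do.
  have htop : F =O[atTop] (fun x : ℝ => x ^ (-(s.re + 1))) := by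
    refine IsBigO.of_bound 0 ?_
    filter_upwards [eventually_ge_atTop 1] with x hx
    have : x ∉ Ioo (0 : ℝ) 1 := fun h => absurd h.2 (not_lt.mpr hx)
    simp [hF, indicator_of_notMem this]
  have hbot : F =O[𝓝[>] 0] (fun x : ℝ => x ^ (-(-(n : ℝ)))) := by
    refine IsBigO.of_bound C ?_
    filter_upwards [Ioo_mem_nhdsGT (show (0 : ℝ) < 1 by norm_num)] with x hx
    rw [neg_neg, Real.rpow_natCast, Real.norm_of_nonneg (pow_nonneg hx.1.le n), hF,
      indicator_of_mem hx]
    exact hC x hx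
  have hrw : ∀ w : ℂ, (fun x : ℝ => (x : ℂ) ^ (w - 1) • F x) =
      (Ioo (0 : ℝ) 1).indicator (fun x : ℝ => (x : ℂ) ^ (w - 1) * r x) := by
    intro w
    ext x
    by_cases hx : x ∈ Ioo (0 : ℝ) 1 <;> simp [hF, hx]
  have hsub : Ioo (0 : ℝ) 1 ∩ Ioi 0 = Ioo 0 1 :=
    inter_eq_left.mpr fun x hx => hx.1
  constructor
  · have := mellinConvergent_of_isBigO_rpow hloc htop (by linarith) hbot hs
    rw [MellinConvergent, hrw, IntegrableOn, integrable_indicator_iff measurableSet_Ioo,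
      IntegrableOn, Measure.restrict_restrict measurableSet_Ioo, hsub] at this
    exact this
  · have := mellin_differentiableAt_of_isBigO_rpow hloc htop (by linarith) hbot hs
    have hmellin : (fun w : ℂ => ∫ x in Ioo (0 : ℝ) 1, (x : ℂ) ^ (w - 1) * r x) = mellin F := by
      funext w
      change _ = ∫ x in Ioi (0 : ℝ), (fun x : ℝ => (x : ℂ) ^ (w - 1) • F x) x
      rw [hrw, setIntegral_indicator measurableSet_Ioo, inter_comm, hsub]
    rwa [hmellin]

lemma mellin_monomial (k : ℕ) {s : ℂ} (hs : 0 < s.re) :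
    ∫ x in Ioo (0 : ℝ) 1, (x : ℂ) ^ (s - 1) * (x : ℂ) ^ k = 1 / (s + k) := by
  have hre : 0 < (s + k).re := by simp; positivity
  have h1 : ∫ x in Ioo (0 : ℝ) 1, (x : ℂ) ^ (s - 1) * (x : ℂ) ^ k =
      ∫ x in Ioo (0 : ℝ) 1, (x : ℂ) ^ (s + k - 1) := by
    refine setIntegral_congr_fun measurableSet_Ioo fun x hx => ?_
    have hx0 : (x : ℂ) ≠ 0 := by exact_mod_cast hx.1.ne'
    rw [← cpow_natCast, ← cpow_add _ _ hx0]
    congr 1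
    ring
  have hne : s + k ≠ 0 := fun h => by simp [h] at hre
  rw [h1, ← integral_Ioc_eq_integral_Ioo, ← intervalIntegral.integral_of_le zero_le_one,
    integral_cpow (Or.inl (by simp only [sub_re, one_re]; linarith))]
  simp [hne]

/-- The pole of `1 / (s + k)` is cancelled by a zero of `1 / Γ`, because
`1 / ((s + k) Γ(s)) = s (s + 1) ⋯ (s + k - 1) / Γ(s + k + 1)`. -/
lemma exists_entire_inv_Gamma (k : ℕ) :
    ∃ E : ℂ → ℂ, Differentiable ℂ E ∧
      ∀ s : ℂ, 0 < s.re → E s = 1 / (s + k) / Complex.Gamma s := by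
  refine ⟨fun s => (∏ j ∈ Finset.range k, (s + j)) * (Complex.Gamma (s + k + 1))⁻¹, ?_, ?_⟩
  · have h1 : Differentiable ℂ fun s : ℂ => (Complex.Gamma (s + k + 1))⁻¹ :=
      differentiable_one_div_Gamma.comp (by fun_prop)
    fun_prop
  · intro s hs
    have hne : ∀ j : ℕ, s + j ≠ 0 := fun j h => by
      have := congrArg re h
      simp at this
      have : (0 : ℝ) ≤ j := by positivity
      linarith
    have key : ∀ m : ℕ, Complex.Gamma (s + m) =
        (∏ j ∈ Finset.range m, (s + j)) * Complex.Gamma s := by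
      intro m
      induction m with
      | zero => simp
      | succ m ih =>
        rw [Finset.prod_range_succ, Nat.cast_succ, ← add_assoc, Complex.Gamma_add_one _ (hne m), ih]
        ring
    have hP : ∏ j ∈ Finset.range k, (s + j) ≠ 0 := Finset.prod_ne_zero_iff.mpr fun j _ => hne j
    have hG : Complex.Gamma s ≠ 0 := Complex.Gamma_ne_zero_of_re_pos hs
    have hk := hne k
    simp only
    rw [Complex.Gamma_add_one _ hk, key]
    field_simp

/-! ### Analytic continuation -/

/-- Continuation of `(Mellin transform of f) / Γ` to `Re s > -n`: the Taylor remainder of order `n` has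
a transform holomorphic there, and the monomials contribute `a k / ((s + k) Γ(s))`. -/
lemma exists_extension {f : ℝ → ℂ} (hf : ∀ m : ℕ, ContDiffOn ℝ m f (Ioo (-1) 1)) {B : ℝ}
    (hB : ∀ x ∈ Ioo (0 : ℝ) 1, ‖f x‖ ≤ B) (n : ℕ) :
    ∃ H : ℂ → ℂ, DifferentiableOn ℂ H {s | -(n : ℝ) < s.re} ∧ ∀ s : ℂ, 0 < s.re →
      H s = (∫ x in Ioo (0 : ℝ) 1, (x : ℂ) ^ (s - 1) * f x) / Complex.Gamma s := by
  obtain ⟨a, C, hC⟩ := exists_taylor_bound hf hB n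
  choose E hEd hE using exists_entire_inv_Gamma
  have hfc : ContinuousOn f (Ioo 0 1) :=
    (hf 0).continuousOn.mono fun x hx => ⟨by linarith [hx.1], hx.2⟩
  set r : ℝ → ℂ := fun x => f x - ∑ k ∈ Finset.range n, a k * (x : ℂ) ^ k with hr
  have hrc : ContinuousOn r (Ioo 0 1) :=
    hfc.sub (Continuous.continuousOn (by fun_prop))
  refine ⟨fun s => (∫ x in Ioo (0 : ℝ) 1, (x : ℂ) ^ (s - 1) * r x) * (Complex.Gamma s)⁻¹ +
    ∑ k ∈ Finset.range n, a k * E k s, ?_, ?_⟩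
  · intro s hs
    refine DifferentiableAt.differentiableWithinAt ?_
    refine ((mellin_Ioo_of_bound hrc hC hs).2.mul (differentiable_one_div_Gamma s)).add ?_
    exact (Differentiable.fun_sum fun k _ => (hEd k).const_mul (a k)) s
  · intro s hs
    have hrint := (mellin_Ioo_of_bound hrc hC
      (lt_of_le_of_lt (neg_nonpos.mpr n.cast_nonneg) hs)).1
    have hmono : ∀ k : ℕ, IntegrableOn (fun x : ℝ => (x : ℂ) ^ (s - 1) * (x : ℂ) ^ k) (Ioo 0 1) :=
      fun k => (mellin_Ioo_of_bound (r := fun x : ℝ => (x : ℂ) ^ k) (C := 1) (n := 0)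
        (Continuous.continuousOn (by fun_prop))
        (fun x hx => by
          rw [norm_pow, norm_real, Real.norm_of_nonneg hx.1.le]
          simpa using pow_le_one₀ hx.1.le hx.2.le) (by simpa using hs)).1
    have hsplit : ∫ x in Ioo (0 : ℝ) 1, (x : ℂ) ^ (s - 1) * f x =
        (∫ x in Ioo (0 : ℝ) 1, (x : ℂ) ^ (s - 1) * r x) +
          ∑ k ∈ Finset.range n, a k * (1 / (s + k)) := by
      have : ∀ x : ℝ, (x : ℂ) ^ (s - 1) * f x = (x : ℂ) ^ (s - 1) * r x +
          ∑ k ∈ Finset.range n, a k * ((x : ℂ) ^ (s - 1) * (x : ℂ) ^ k) := by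
        intro x
        simp only [hr, mul_sub, Finset.mul_sum]
        rw [Finset.sum_congr rfl fun k _ => mul_left_comm ((x : ℂ) ^ (s - 1)) (a k) ((x : ℂ) ^ k)]
        ring
      simp_rw [this]
      rw [integral_add hrint (integrable_finsetSum _ fun k _ => (hmono k).const_mul (a k)),
        integral_finsetSum _ fun k _ => (hmono k).const_mul (a k)]
      simp_rw [integral_const_mul, mellin_monomial _ hs]
    simp only
    rw [hsplit, add_div, div_eq_mul_inv, Finset.sum_div]
    congr 1
    refine Finset.sum_congr rfl fun k _ => ?_
    rw [hE k s hs, mul_div_assoc]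

/-- Continuations to each half-plane `Re s > -n` agree on overlaps by the identity theorem, so they glue
to an entire function. -/
lemma exists_entire_of_extensions {φ : ℂ → ℂ}
    (h : ∀ n : ℕ, ∃ H : ℂ → ℂ, DifferentiableOn ℂ H {s | -(n : ℝ) < s.re} ∧
      ∀ s : ℂ, 0 < s.re → H s = φ s) :
    ∃ G : ℂ → ℂ, Differentiable ℂ G ∧ ∀ s : ℂ, 0 < s.re → G s = φ s := by
  choose H hHd hH using h
  have hopen : ∀ n : ℕ, IsOpen {s : ℂ | -(n : ℝ) < s.re} := fun n =>
    isOpen_lt continuous_const continuous_re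
  have hcons : ∀ m n : ℕ, m ≤ n → EqOn (H m) (H n) {s | -(m : ℝ) < s.re} := by
    intro m n hmn
    have hsub : {s : ℂ | -(m : ℝ) < s.re} ⊆ {s | -(n : ℝ) < s.re} := by
      intro s hs
      have : (m : ℝ) ≤ n := by exact_mod_cast hmn
      simp only [mem_ofPred_eq] at hs ⊢
      linarith
    refine ((hHd m).analyticOnNhd (hopen m)).eqOn_of_preconnected_of_eventuallyEq
      (((hHd n).mono hsub).analyticOnNhd (hopen m))
      (convex_halfSpace_re_gt _).isPreconnected (z₀ := 1) ?_ ?_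
    · simp only [mem_ofPred_eq, one_re]
      have : (0 : ℝ) ≤ m := by positivity
      linarith
    · filter_upwards [(isOpen_lt continuous_const continuous_re).mem_nhds
        (show (0 : ℝ) < (1 : ℂ).re by simp)] with s hs
      rw [hH m s hs, hH n s hs]
  -- The index is chosen so that `s` lies in the half-plane where `H n` is holomorphic.
  refine ⟨fun s => H ⌈|s.re| + 1⌉₊ s, fun s => ?_, fun s hs => hH _ s hs⟩
  obtain ⟨N, hN⟩ := exists_nat_gt (-s.re)
  have hsN : s ∈ {s : ℂ | -(N : ℝ) < s.re} := by
    simp only [mem_ofPred_eq]; linarith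
  have hd := (hHd N).differentiableAt ((hopen N).mem_nhds hsN)
  refine hd.congr_of_eventuallyEq ?_
  filter_upwards [(hopen N).mem_nhds hsN] with w hw
  have hw' : w ∈ {s : ℂ | -((⌈|w.re| + 1⌉₊ : ℕ) : ℝ) < s.re} := by
    simp only [mem_ofPred_eq]
    linarith [Nat.le_ceil (|w.re| + 1), neg_abs_le w.re]
  rcases le_total ⌈|w.re| + 1⌉₊ N with h | h
  · exact hcons _ _ h hw'
  · exact (hcons _ _ h hw).symm

end Helpers

theorem stmt5 (g : ℂ → ℂ) (hg : Differentiable ℂ g)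
    (hgeven : ∀ z : ℂ, g (-z) = g z)
    (hgreal : ∀ t : ℝ, (g (t : ℂ)).im = 0)
    (hgdecay : ∀ A > (0 : ℝ), ∀ N : ℕ, ∃ C : ℝ, ∀ z : ℂ, |z.im| ≤ A →
      (1 + |z.re|) ^ N * ‖g z‖ ≤ C)
    (α : ℕ) (hα : 1 ≤ α) (u v : ℂ) :
    -- `s ↦ g*(s; u, v)` is holomorphic on the half-plane `Re s > 0`
    DifferentiableOn ℂ (fun s : ℂ => gstar g α s u v) {s : ℂ | 0 < s.re} ∧
    -- there is an entire function `G` with `G(s) = g*(s; u, v)/Γ(s)` for `Re s > 0`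
    ∃ G : ℂ → ℂ, Differentiable ℂ G ∧
      ∀ s : ℂ, 0 < s.re → G s = gstar g α s u v / Complex.Gamma s := by
  obtain ⟨B, hB⟩ := norm_gtilde_le hg hgdecay α u v
  have hf := contDiffOn_gtilde hg hgdecay α u v
  constructor
  · intro s hs
    have hc : ContinuousOn (fun x => gtilde g α x u v) (Set.Ioo 0 1) :=
      (hf 0).continuousOn.mono fun x hx => ⟨by linarith [hx.1], hx.2⟩
    exact (mellin_Ioo_of_bound (n := 0) hc (by simpa using hB)
      (by simpa using hs)).2.differentiableWithinAt
  · exact exists_entire_of_extensions fun n => exists_extension hf hB n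
end

section
/- Let g: ℂ → ℂ be entire and of rapid decay in every horizontal strip, i.e., for every A > 0 and every N ∈ ℕ, sup_{|Im z| ≤ A} (1+|Re z|)^N |g(z)| < ∞. Then its Fourier transform ĝ(ξ) = ∫_ℝ g(t) e^{−iξt} dt decays exponentially at every rate: for every A > 0 there exists C > 0 such that |ĝ(ξ)| ≤ C e^{−A|ξ|} for all ξ ∈ ℝ. -/
/-!
The Paley–Wiener contour shift. The integrand `F z = g z * exp (-iξz)` is entire and is
`O(1 / (1 + (re z)²))` in horizontal strips, so Cauchy's theorem on rectangles with vertical sides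
going to infinity gives `∫ F(t) dt = ∫ F(t + ic) dt` for every real `c`
(`integral_eq_integral_shift`). On the shifted line the exponential has modulus `exp (ξc)`; for
`c = -A` (if `ξ ≥ 0`) or `c = A` (if `ξ < 0`) this is `exp (-A|ξ|)`, while the
integral of `|g|` is bounded independently of `ξ`.
-/

open Complex MeasureTheory

/-- A vertical side of the contour contributes nothing in the limit. The map `σ` stands for
`T ↦ T` or `T ↦ -T`, so that both sides are covered. -/
lemma tendsto_vertical_side (F : ℂ → ℂ) (c K : ℝ)
    (hK : ∀ z : ℂ, |z.im| ≤ |c| → ‖F z‖ ≤ K * (1 + z.re ^ 2)⁻¹)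
    (σ : ℝ → ℝ) (hσ : ∀ T, σ T ^ 2 = T ^ 2) :
    Filter.Tendsto (fun T : ℝ => ∫ y : ℝ in (0 : ℝ)..c, F ((σ T : ℝ) + y * I))
      Filter.atTop (nhds 0) := by
  have hlim : Filter.Tendsto (fun T : ℝ => K * (1 + T ^ 2)⁻¹ * |c - 0|)
      Filter.atTop (nhds 0) := by
    have h : Filter.Tendsto (fun T : ℝ => (1 + T ^ 2)⁻¹) Filter.atTop (nhds 0) :=
      (Filter.tendsto_atTop_add_const_left _ _
        (Filter.tendsto_pow_atTop two_ne_zero)).inv_tendsto_atTop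
    simpa using (h.const_mul K).mul_const |c - 0|
  refine squeeze_zero_norm (fun T => ?_) hlim
  refine intervalIntegral.norm_integral_le_of_norm_le_const fun y hy => ?_
  have hy' : |y| ≤ |c| := by
    simpa using Set.abs_sub_left_of_mem_uIcc (Set.uIoc_subset_uIcc hy)
  simpa [hσ] using hK ((σ T : ℝ) + y * I) (by simpa using hy')

lemma integrable_shift (F : ℂ → ℂ) (hF : Continuous F) (c K : ℝ)
    (hK : ∀ z : ℂ, |z.im| ≤ |c| → ‖F z‖ ≤ K * (1 + z.re ^ 2)⁻¹)
    (b : ℝ) (hb : |b| ≤ |c|) : Integrable (fun t : ℝ => F (t + b * I)) := by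
  refine (integrable_inv_one_add_sq.const_mul K).mono' (by fun_prop) ?_
  refine Filter.Eventually.of_forall fun t => ?_
  simpa using hK (t + b * I) (by simpa using hb)

/-- Shift of the line of integration from `ℝ` to `ℝ + ic` for an entire function decaying
quadratically in the strip between the two lines. -/
lemma integral_eq_integral_shift (F : ℂ → ℂ) (hF : Differentiable ℂ F) (c K : ℝ)
    (hK : ∀ z : ℂ, |z.im| ≤ |c| → ‖F z‖ ≤ K * (1 + z.re ^ 2)⁻¹) :
    ∫ t : ℝ, F t = ∫ t : ℝ, F (t + c * I) := by
  have h0 : Integrable (fun t : ℝ => F t) := by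
    simpa using integrable_shift F hF.continuous c K hK 0 (by simp)
  have hc := integrable_shift F hF.continuous c K hK c le_rfl
  have l0 := intervalIntegral_tendsto_integral h0 Filter.tendsto_neg_atTop_atBot Filter.tendsto_id
  have lc := intervalIntegral_tendsto_integral hc Filter.tendsto_neg_atTop_atBot Filter.tendsto_id
  have vp := tendsto_vertical_side F c K hK (fun T => T) (fun T => rfl)
  have vm := tendsto_vertical_side F c K hK (fun T => -T) (fun T => by ring)
  have hlim := ((l0.sub lc).add (vp.const_smul I)).sub (vm.const_smul I)
  have hzero : ∀ T : ℝ, (∫ x : ℝ in (-T)..T, F x) - (∫ x : ℝ in (-T)..T, F (x + c * I)) +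
      I • (∫ y : ℝ in (0 : ℝ)..c, F ((T : ℝ) + y * I)) -
      I • (∫ y : ℝ in (0 : ℝ)..c, F ((-T : ℝ) + y * I)) = 0 := by
    intro T
    have h := integral_boundary_rect_eq_zero_of_differentiableOn F (-T) (T + c * I)
      hF.differentiableOn
    simpa using h
  have hlim' := hlim.congr hzero
  have h := tendsto_nhds_unique tendsto_const_nhds hlim'
  simp only [smul_zero, add_zero, sub_zero] at h
  exact sub_eq_zero.mp h.symm

lemma norm_cexp_neg_I_mul (ξ : ℝ) (z : ℂ) :
    ‖Complex.exp (-(Complex.I * ξ * z))‖ = Real.exp (ξ * z.im) := by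
  rw [Complex.norm_exp]
  simp

theorem stmt7 (g : ℂ → ℂ) (hg : Differentiable ℂ g)
    (hgdecay : ∀ A > (0 : ℝ), ∀ N : ℕ, ∃ C : ℝ, ∀ z : ℂ, |z.im| ≤ A →
      (1 + |z.re|) ^ N * ‖g z‖ ≤ C) :
    ∀ A > (0 : ℝ), ∃ C > (0 : ℝ), ∀ ξ : ℝ,
      ‖fhat g ξ‖ ≤ C * Real.exp (-A * |ξ|) := by
  intro A hA
  obtain ⟨C, hC⟩ := hgdecay A hA 2
  have hC0 : 0 ≤ C := le_trans (by positivity) (hC 0 (by simpa using hA.le))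
  have hgb : ∀ z : ℂ, |z.im| ≤ A → ‖g z‖ ≤ C * (1 + z.re ^ 2)⁻¹ := by
    intro z hz
    rw [← div_eq_mul_inv, le_div_iff₀ (by positivity), mul_comm]
    refine le_trans (mul_le_mul_of_nonneg_right ?_ (norm_nonneg _)) (hC z hz)
    nlinarith [sq_abs z.re, abs_nonneg z.re]
  -- `∫ (1 + t²)⁻¹ dt = π`; the summand `1` makes the constant positive even if `C = 0`.
  refine ⟨C * Real.pi + 1, by positivity, fun ξ => ?_⟩
  obtain ⟨c, hcA, hcξ⟩ : ∃ c : ℝ, |c| = A ∧ ξ * c = -A * |ξ| := by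
    rcases le_total 0 ξ with h | h
    · exact ⟨-A, by rw [abs_neg, abs_of_pos hA], by rw [abs_of_nonneg h]; ring⟩
    · exact ⟨A, abs_of_pos hA, by rw [abs_of_nonpos h]; ring⟩
  have hshift := integral_eq_integral_shift
    (fun z => g z * Complex.exp (-(Complex.I * ξ * z))) (by fun_prop) c
    (C * Real.exp (|ξ| * A)) (by
      intro z hz
      rw [hcA] at hz
      rw [norm_mul, norm_cexp_neg_I_mul, mul_right_comm]
      have h : ξ * z.im ≤ |ξ| * A := by
        refine (le_abs_self _).trans ?_
        rw [abs_mul]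
        gcongr
      exact mul_le_mul (hgb z hz) (Real.exp_le_exp.mpr h) (Real.exp_pos _).le (by positivity))
  have hbound : ‖∫ t : ℝ, g (t + c * I) * Complex.exp (-(Complex.I * ξ * (t + c * I)))‖ ≤
      ∫ t : ℝ, C * Real.exp (-A * |ξ|) * (1 + t ^ 2)⁻¹ := by
    refine norm_integral_le_of_norm_le (integrable_inv_one_add_sq.const_mul _)
      (Filter.Eventually.of_forall fun t => ?_)
    rw [norm_mul, norm_cexp_neg_I_mul, mul_right_comm]
    have him : ((t : ℂ) + c * I).im = c := by simp
    have h := hgb (t + c * I) (by rw [him, hcA])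
    rw [him, hcξ]
    refine mul_le_mul_of_nonneg_right ?_ (Real.exp_pos _).le
    simpa using h
  rw [integral_const_mul, integral_univ_inv_one_add_sq] at hbound
  unfold fhat
  rw [hshift]
  refine hbound.trans ?_
  nlinarith [Real.exp_pos (-A * |ξ|)]
end

section
/- Let α ≥ 2 be an integer, δ > 0, B ≥ 0, C_W > 0, and let ν ∈ ℂ with ν² ∈ ℝ. There exists a constant C > 0, depending only on α, δ, B, C_W and ν, with the following property. For every nonzero integer p, every τ ∈ ℂ with Re τ ≥ δ, and every twice continuously differentiable W: (0,∞) → ℂ satisfying (i) the differential equation W''(y) = ((2π)² − 4πp/y + (ν² − 1/4) y^{−2}) W(y) for all y > 0, (ii) the normalization ∫₀^∞ |W(y)|² dy/y ≤ π, and (iii) the bounds |W(y)| + y|W'(y)| ≤ C_W y^{1/2} for 0 < y ≤ 1 and |W(y)| + |W'(y)| ≤ C_W (1+y)^{B} for y ≥ 1, one has | (1/π) ∫₀^∞ y^{α+1/2} e^{−τy} conj(W(y)) dy/y | ≤ C (1 + |τ|)^{2α} (1 + |p|)^{−α}. -/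
open Complex MeasureTheory

/-!
Put `V = conj W`. Since `c = ν² - 1/4` is real, `V` solves the same equation as `W`, namely
`V'' = (4π² - 4πp/y + c/y²) V`. For the moments `J(s) = ∫₀^∞ y^{s-1} e^{-τy} V(y) dy`, integrating
by parts twice against `w = y^s e^{-τy}` (that is, integrating the derivative of `w'V - wV'`)
moves the differential operator onto `w` and gives, for `s ≥ 3/2`,

  `4πp J(s) = (4π² - τ²) J(s+1) + 2τs J(s) + (c - s(s-1)) J(s-1)`    (`moment_recurrence`).

So each application gains a factor `|p|⁻¹` and costs at most `(1+|τ|)²`, while the smallest exponent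
drops by one. Starting from `s = α + 1/2`, it can be applied `α` times, every intermediate exponent
staying `≥ 3/2`, so that all boundary terms vanish; the remaining moments have exponent `≥ 1/2`
and are bounded directly from the growth of `V` (`moment_bound`).
-/

/-! ### Moments of solutions -/

/-- A solution on `(0,∞)` of `V'' = (4π² - 4πp/y + c/y²) V`, with derivative `V'`, obeying growth
bounds that are uniform in `y`: the behaviour `y^{1/2}` at the origin, and a growth `e^{εy}` at
infinity which replaces polynomial growth of any order. -/
structure WhittakerSol (c : ℂ) (M ε : ℝ) (p : ℤ) (V V' : ℝ → ℂ) : Prop where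
  deriv : ∀ y : ℝ, 0 < y → HasDerivAt V (V' y) y
  deriv' : ∀ y : ℝ, 0 < y → HasDerivAt V' (((4 * (Real.pi : ℂ) ^ 2
    - 4 * (Real.pi : ℂ) * (p : ℂ) / (y : ℂ) + c / (y : ℂ) ^ 2)) * V y) y
  bound : ∀ y : ℝ, 0 < y → ‖V y‖ ≤ M * y ^ (1 / 2 : ℝ) * Real.exp (ε * y)
  bound' : ∀ y : ℝ, 0 < y → ‖V' y‖ ≤ M * y ^ (-(1 / 2) : ℝ) * Real.exp (ε * y)

/-- The integrand of the moment `J(s)`. -/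
noncomputable def momentFun (τ : ℂ) (V : ℝ → ℂ) (s : ℝ) (y : ℝ) : ℂ :=
  ((y ^ (s - 1) : ℝ) : ℂ) * Complex.exp (-(τ * (y : ℂ))) * V y

/-- The moment `J(s) = ∫₀^∞ y^{s-1} e^{-τy} V(y) dy`. -/
noncomputable def moment (τ : ℂ) (V : ℝ → ℂ) (s : ℝ) : ℂ :=
  ∫ y in Set.Ioi (0 : ℝ), momentFun τ V s y

lemma norm_exp_le {ε : ℝ} {τ : ℂ} (hτ : 2 * ε ≤ τ.re) {y : ℝ} (hy : 0 < y) :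
    ‖Complex.exp (-(τ * (y : ℂ)))‖ ≤ Real.exp (-(2 * ε) * y) := by
  rw [Complex.norm_exp, Real.exp_le_exp]
  simp only [neg_re, mul_re, ofReal_re, ofReal_im, mul_zero, sub_zero]
  nlinarith

lemma integrableOn_rpow_exp {r ε : ℝ} (hr : -1 < r) (hε : 0 < ε) :
    IntegrableOn (fun y : ℝ => y ^ r * Real.exp (-ε * y)) (Set.Ioi 0) := by
  simpa using integrableOn_rpow_mul_exp_neg_mul_rpow hr one_pos hε

lemma norm_momentFun_le {c : ℂ} {M ε : ℝ} {p : ℤ} {V V' : ℝ → ℂ}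
    (h : WhittakerSol c M ε p V V') {τ : ℂ} (hτ : 2 * ε ≤ τ.re)
    (s : ℝ) {y : ℝ} (hy : 0 < y) :
    ‖momentFun τ V s y‖ ≤ M * (y ^ (s - 1 / 2) * Real.exp (-ε * y)) := by
  have e1 : Real.exp (-ε * y) = Real.exp (-(2 * ε) * y) * Real.exp (ε * y) := by
    rw [← Real.exp_add]; congr 1; ring
  have e2 : y ^ (s - 1 / 2) = y ^ (s - 1) * y ^ (1 / 2 : ℝ) := by
    rw [← Real.rpow_add hy]; congr 1; ring
  have hp := Real.rpow_pos_of_pos hy (s - 1)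
  rw [momentFun, norm_mul, norm_mul, Complex.norm_real, Real.norm_of_nonneg hp.le, e1, e2]
  calc _ ≤ y ^ (s - 1) * Real.exp (-(2 * ε) * y) * (M * y ^ (1 / 2 : ℝ) * Real.exp (ε * y)) := by
        gcongr
        · exact norm_exp_le hτ hy
        · exact h.bound y hy
    _ = _ := by ring

lemma integrableOn_momentFun {c : ℂ} {M ε : ℝ} (hε : 0 < ε) {p : ℤ} {V V' : ℝ → ℂ}
    (h : WhittakerSol c M ε p V V') {τ : ℂ} (hτ : 2 * ε ≤ τ.re)
    {s : ℝ} (hs : 1 / 2 ≤ s) : IntegrableOn (momentFun τ V s) (Set.Ioi 0) := by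
  refine Integrable.mono' ((integrableOn_rpow_exp (r := s - 1 / 2) (by linarith) hε).const_mul M)
    ?_ ?_
  · refine ContinuousOn.aestronglyMeasurable ?_ measurableSet_Ioi
    intro y hy
    have hy' : (0 : ℝ) < y := hy
    refine ContinuousAt.continuousWithinAt ?_
    refine ContinuousAt.mul (ContinuousAt.mul ?_ (by fun_prop)) (h.deriv y hy').continuousAt
    exact Complex.continuous_ofReal.continuousAt.comp
      (Real.continuousAt_rpow_const _ _ (Or.inl hy'.ne'))
  · filter_upwards [ae_restrict_mem measurableSet_Ioi] with y hy
    exact norm_momentFun_le h hτ s hy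

lemma norm_moment_le {c : ℂ} {M ε : ℝ} (hε : 0 < ε) {p : ℤ} {V V' : ℝ → ℂ}
    (h : WhittakerSol c M ε p V V') {τ : ℂ} (hτ : 2 * ε ≤ τ.re)
    {s : ℝ} (hs : 1 / 2 ≤ s) :
    ‖moment τ V s‖ ≤ ∫ y in Set.Ioi (0 : ℝ), M * (y ^ (s - 1 / 2) * Real.exp (-ε * y)) := by
  refine norm_integral_le_of_norm_le
    ((integrableOn_rpow_exp (r := s - 1 / 2) (by linarith) hε).const_mul M) ?_
  filter_upwards [ae_restrict_mem measurableSet_Ioi] with y hy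
  exact norm_momentFun_le h hτ s hy

/-! ### The recurrence between moments -/

lemma hasDerivAt_rpow_exp (τ : ℂ) (s : ℝ) {y : ℝ} (hy : 0 < y) :
    HasDerivAt (fun y : ℝ => ((y ^ s : ℝ) : ℂ) * Complex.exp (-(τ * (y : ℂ))))
      (((s * y ^ (s - 1) : ℝ) : ℂ) * Complex.exp (-(τ * (y : ℂ)))
        - τ * (((y ^ s : ℝ) : ℂ) * Complex.exp (-(τ * (y : ℂ))))) y := by
  have h1 := (Real.hasDerivAt_rpow_const (p := s) (Or.inl hy.ne')).ofReal_comp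
  have h2 : HasDerivAt (fun y : ℝ => Complex.exp (-(τ * (y : ℂ))))
      (Complex.exp (-(τ * (y : ℂ))) * (-(τ * 1))) y :=
    (((hasDerivAt_id y).ofReal_comp.const_mul τ).neg).cexp
  refine (h1.mul h2).congr_deriv ?_
  ring

/-- The boundary term `w'V - wV'` of the double integration by parts, for `w = y^s e^{-τy}`. -/
noncomputable def bdry (τ : ℂ) (V V' : ℝ → ℂ) (s : ℝ) (y : ℝ) : ℂ :=
  ((s : ℂ) * (((y ^ (s - 1) : ℝ) : ℂ) * Complex.exp (-(τ * (y : ℂ))))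
    - τ * (((y ^ s : ℝ) : ℂ) * Complex.exp (-(τ * (y : ℂ))))) * V y
  - ((y ^ s : ℝ) : ℂ) * Complex.exp (-(τ * (y : ℂ))) * V' y

lemma hasDerivAt_bdry {c : ℂ} {M ε : ℝ} {p : ℤ} {V V' : ℝ → ℂ}
    (h : WhittakerSol c M ε p V V') (τ : ℂ) (s : ℝ) {y : ℝ} (hy : 0 < y) :
    HasDerivAt (bdry τ V V' s)
      (((s : ℂ) * (s - 1) - c) * momentFun τ V (s - 1) y
        + (4 * (Real.pi : ℂ) * (p : ℂ) - 2 * τ * s) * momentFun τ V s y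
        + (τ ^ 2 - 4 * (Real.pi : ℂ) ^ 2) * momentFun τ V (s + 1) y) y := by
  have hy0 : (y : ℂ) ≠ 0 := by exact_mod_cast hy.ne'
  have e1 : y ^ (s - 1) = y ^ (s - 1 - 1) * y := by
    conv_rhs => rw [← Real.rpow_add_one hy.ne']
    congr 1; ring
  have e2 : y ^ s = y ^ (s - 1 - 1) * y ^ 2 := by
    rw [← Real.rpow_natCast y 2, ← Real.rpow_add hy]; congr 1; push_cast; ring
  have d0 := hasDerivAt_rpow_exp τ s hy
  have d1 := hasDerivAt_rpow_exp τ (s - 1) hy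
  have D := (((d1.const_mul (s : ℂ)).sub (d0.const_mul τ)).mul (h.deriv y hy)).sub
    (d0.mul (h.deriv' y hy))
  refine D.congr_deriv ?_
  simp only [momentFun, add_sub_cancel_right]
  dsimp only [Pi.sub_apply]
  rw [e2, e1]
  push_cast
  field_simp
  ring

lemma norm_bdry_le {c : ℂ} {M ε : ℝ} {p : ℤ} {V V' : ℝ → ℂ}
    (h : WhittakerSol c M ε p V V') {τ : ℂ} (hτ : 2 * ε ≤ τ.re)
    {s : ℝ} (hs : 0 ≤ s) {y : ℝ} (hy : 0 < y) :
    ‖bdry τ V V' s y‖ ≤ (s + 1) * M * (y ^ (s - 1 / 2) * Real.exp (-ε * y))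
      + ‖τ‖ * M * (y ^ (s + 1 / 2) * Real.exp (-ε * y)) := by
  have h1 := norm_momentFun_le h hτ s hy
  have h2 := norm_momentFun_le h hτ (s + 1) hy
  have h3 : ‖((y ^ s : ℝ) : ℂ) * Complex.exp (-(τ * (y : ℂ))) * V' y‖
      ≤ M * (y ^ (s - 1 / 2) * Real.exp (-ε * y)) := by
    have e1 : Real.exp (-ε * y) = Real.exp (-(2 * ε) * y) * Real.exp (ε * y) := by
      rw [← Real.exp_add]; congr 1; ring
    have e2 : y ^ (s - 1 / 2) = y ^ s * y ^ (-(1 / 2) : ℝ) := by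
      rw [← Real.rpow_add hy]; congr 1
    have hp := Real.rpow_pos_of_pos hy s
    rw [norm_mul, norm_mul, Complex.norm_real, Real.norm_of_nonneg hp.le, e1, e2]
    calc _ ≤ y ^ s * Real.exp (-(2 * ε) * y) * (M * y ^ (-(1 / 2) : ℝ) * Real.exp (ε * y)) := by
          gcongr
          · exact norm_exp_le hτ hy
          · exact h.bound' y hy
      _ = _ := by ring
  have e : bdry τ V V' s y = s * momentFun τ V s y - τ * momentFun τ V (s + 1) y
      - ((y ^ s : ℝ) : ℂ) * Complex.exp (-(τ * (y : ℂ))) * V' y := by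
    simp only [bdry, momentFun, add_sub_cancel_right]; ring
  rw [show s + 1 - 1 / 2 = s + 1 / 2 by ring] at h2
  rw [e]
  calc _ ≤ ‖(s : ℂ) * momentFun τ V s y‖ + ‖τ * momentFun τ V (s + 1) y‖
        + ‖((y ^ s : ℝ) : ℂ) * Complex.exp (-(τ * (y : ℂ))) * V' y‖ :=
        (norm_sub_le _ _).trans (by gcongr; exact norm_sub_le _ _)
    _ ≤ s * (M * (y ^ (s - 1 / 2) * Real.exp (-ε * y)))
        + ‖τ‖ * (M * (y ^ (s + 1 / 2) * Real.exp (-ε * y)))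
        + M * (y ^ (s - 1 / 2) * Real.exp (-ε * y)) := by
        rw [norm_mul, norm_mul, Complex.norm_real, Real.norm_of_nonneg hs]
        gcongr
    _ = _ := by ring

lemma tendsto_bdry_zero {c : ℂ} {M ε : ℝ} {p : ℤ} {V V' : ℝ → ℂ}
    (h : WhittakerSol c M ε p V V') {τ : ℂ} (hτ : 2 * ε ≤ τ.re)
    {s : ℝ} (hs : 3 / 2 ≤ s) :
    Filter.Tendsto (bdry τ V V' s) (nhdsWithin 0 (Set.Ioi 0)) (nhds 0) := by
  have T : ∀ r : ℝ, 0 < r →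
      Filter.Tendsto (fun y : ℝ => y ^ r * Real.exp (-ε * y)) (nhdsWithin 0 (Set.Ioi 0))
        (nhds 0) := by
    intro r hr
    have : ContinuousAt (fun y : ℝ => y ^ r * Real.exp (-ε * y)) 0 :=
      (Real.continuousAt_rpow_const _ _ (Or.inr hr.le)).mul (by fun_prop)
    have h0 := this.tendsto
    simp only [Real.zero_rpow hr.ne', zero_mul] at h0
    exact h0.mono_left nhdsWithin_le_nhds
  have L := Filter.Tendsto.add
    (Filter.Tendsto.const_mul ((s + 1) * M) (T (s - 1 / 2) (by linarith)))
    (Filter.Tendsto.const_mul (‖τ‖ * M) (T (s + 1 / 2) (by linarith)))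
  rw [mul_zero, mul_zero, add_zero] at L
  refine squeeze_zero_norm' ?_ L
  filter_upwards [self_mem_nhdsWithin] with y hy
  exact norm_bdry_le h hτ (by linarith) hy

lemma tendsto_bdry_atTop {c : ℂ} {M ε : ℝ} (hε : 0 < ε) {p : ℤ} {V V' : ℝ → ℂ}
    (h : WhittakerSol c M ε p V V') {τ : ℂ} (hτ : 2 * ε ≤ τ.re)
    {s : ℝ} (hs : 3 / 2 ≤ s) :
    Filter.Tendsto (bdry τ V V' s) Filter.atTop (nhds 0) := by
  have T := fun r : ℝ => tendsto_rpow_mul_exp_neg_mul_atTop_nhds_zero r ε hε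
  have L := Filter.Tendsto.add
    (Filter.Tendsto.const_mul ((s + 1) * M) (T (s - 1 / 2)))
    (Filter.Tendsto.const_mul (‖τ‖ * M) (T (s + 1 / 2)))
  rw [mul_zero, mul_zero, add_zero] at L
  refine squeeze_zero_norm' ?_ L
  filter_upwards [Filter.eventually_gt_atTop 0] with y hy
  exact norm_bdry_le h hτ (by linarith) hy

lemma moment_recurrence {c : ℂ} {M ε : ℝ} (hε : 0 < ε) {p : ℤ} {V V' : ℝ → ℂ}
    (h : WhittakerSol c M ε p V V') {τ : ℂ} (hτ : 2 * ε ≤ τ.re)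
    {s : ℝ} (hs : 3 / 2 ≤ s) :
    4 * (Real.pi : ℂ) * (p : ℂ) * moment τ V s
      = (4 * (Real.pi : ℂ) ^ 2 - τ ^ 2) * moment τ V (s + 1) + 2 * τ * s * moment τ V s
        + (c - s * (s - 1)) * moment τ V (s - 1) := by
  have i1 := (integrableOn_momentFun hε h hτ (s := s - 1) (by linarith)).const_mul
    ((s : ℂ) * (s - 1) - c)
  have i2 := (integrableOn_momentFun hε h hτ (s := s) (by linarith)).const_mul
    (4 * (Real.pi : ℂ) * (p : ℂ) - 2 * τ * s)
  have i3 := (integrableOn_momentFun hε h hτ (s := s + 1) (by linarith)).const_mul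
    (τ ^ 2 - 4 * (Real.pi : ℂ) ^ 2)
  -- The fundamental theorem of calculus on `(0,∞)` with one-sided limits at `0` is available
  -- for products; it is used here with second factor `1`.
  have key := integral_Ioi_deriv_mul_eq_sub (a := (0 : ℝ)) (u := bdry τ V V' s)
    (v := fun _ => (1 : ℂ)) (v' := fun _ => 0) (a' := 0) (b' := 0)
    (fun y hy => hasDerivAt_bdry h τ s hy) (fun y _ => hasDerivAt_const y 1)
    (((i1.add i2).add i3).congr (Filter.Eventually.of_forall fun y => by simp))
    ((tendsto_bdry_zero h hτ hs).congr fun y => by simp)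
    ((tendsto_bdry_atTop hε h hτ hs).congr fun y => by simp)
  simp only [mul_one, mul_zero, add_zero, sub_zero] at key
  have i12 : IntegrableOn (fun y => ((s : ℂ) * (s - 1) - c) * momentFun τ V (s - 1) y
      + (4 * (Real.pi : ℂ) * (p : ℂ) - 2 * τ * s) * momentFun τ V s y) (Set.Ioi 0) := i1.add i2
  rw [integral_add i12 i3, integral_add i1 i2, integral_const_mul, integral_const_mul,
    integral_const_mul] at key
  change _ * moment τ V (s - 1) + _ * moment τ V s + _ * moment τ V (s + 1) = 0 at key
  linear_combination key

/-! ### Decay in `p` -/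

/-- Decay of the moments in `p`, by induction on the number `k` of applications of the recurrence;
the constant is uniform in `p`, `τ` and the solution `V`. -/
lemma moment_bound (c : ℂ) (M : ℝ) {ε : ℝ} (hε : 0 < ε) (k : ℕ) :
    ∀ s : ℝ, 1 / 2 + k ≤ s → ∃ C > (0 : ℝ), ∀ p : ℤ, p ≠ 0 → ∀ τ : ℂ, 2 * ε ≤ τ.re →
      ∀ V V' : ℝ → ℂ, WhittakerSol c M ε p V V' →
        (1 + |(p : ℝ)|) ^ k * ‖moment τ V s‖ ≤ C * (1 + ‖τ‖) ^ (2 * k) := by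
  induction k with
  | zero =>
    intro s hs
    refine ⟨|∫ y in Set.Ioi (0 : ℝ), M * (y ^ (s - 1 / 2) * Real.exp (-ε * y))| + 1,
      by positivity, fun p _ τ hτ V V' h => ?_⟩
    have := norm_moment_le hε h hτ (s := s) (by simpa using hs)
    have h2 := le_abs_self (∫ y in Set.Ioi (0 : ℝ), M * (y ^ (s - 1 / 2) * Real.exp (-ε * y)))
    simp only [pow_zero, one_mul, mul_zero, mul_one]
    linarith
  | succ k ih =>
    intro s hs
    push_cast at hs
    have hk : (0 : ℝ) ≤ k := k.cast_nonneg
    obtain ⟨C1, hC1, H1⟩ := ih (s + 1) (by linarith)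
    obtain ⟨C2, hC2, H2⟩ := ih s (by linarith)
    obtain ⟨C3, hC3, H3⟩ := ih (s - 1) (by linarith)
    refine ⟨(4 * Real.pi ^ 2 + 1) * C1 + 2 * |s| * C2 + ‖c - s * (s - 1)‖ * C3,
      by positivity, fun p hp τ hτ V V' h => ?_⟩
    have h1 := H1 p hp τ hτ V V' h
    have h2 := H2 p hp τ hτ V V' h
    have h3 := H3 p hp τ hτ V V' h
    have hrec := moment_recurrence hε h hτ (s := s) (by linarith)
    have hp1 : (1 : ℝ) ≤ |(p : ℝ)| := by exact_mod_cast Int.one_le_abs hp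
    have hpi := Real.pi_gt_three
    have t0 := norm_nonneg τ
    set P := (1 + |(p : ℝ)|) ^ k with hP
    have hPpos : 0 < P := by positivity
    have hT : (0 : ℝ) < (1 + ‖τ‖) ^ (2 * k) := by positivity
    have a1 : (1 + |(p : ℝ)|) * ‖moment τ V s‖
        ≤ (4 * Real.pi ^ 2 + ‖τ‖ ^ 2) * ‖moment τ V (s + 1)‖ + 2 * ‖τ‖ * |s| * ‖moment τ V s‖
          + ‖c - s * (s - 1)‖ * ‖moment τ V (s - 1)‖ := by
      calc _ ≤ (4 * Real.pi * |(p : ℝ)|) * ‖moment τ V s‖ := by gcongr; nlinarith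
        _ = ‖4 * (Real.pi : ℂ) * (p : ℂ) * moment τ V s‖ := by
          simp [abs_of_pos Real.pi_pos]
        _ ≤ ‖4 * (Real.pi : ℂ) ^ 2 - τ ^ 2‖ * ‖moment τ V (s + 1)‖
          + ‖2 * τ * s‖ * ‖moment τ V s‖ + ‖c - s * (s - 1)‖ * ‖moment τ V (s - 1)‖ := by
          rw [hrec]
          refine (norm_add_le _ _).trans ?_
          rw [norm_mul (c - s * (s - 1))]
          gcongr
          refine (norm_add_le _ _).trans ?_
          rw [norm_mul, norm_mul (2 * τ * s)]
        _ ≤ _ := by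
          gcongr
          · refine (norm_sub_le _ _).trans ?_
            simp [abs_of_pos Real.pi_pos]
          · simp
    have q1 : 4 * Real.pi ^ 2 + ‖τ‖ ^ 2 ≤ (4 * Real.pi ^ 2 + 1) * (1 + ‖τ‖) ^ 2 := by
      have : 0 ≤ Real.pi ^ 2 * (2 * ‖τ‖ + ‖τ‖ ^ 2) := by positivity
      nlinarith
    have q2 : 2 * ‖τ‖ * |s| ≤ 2 * |s| * (1 + ‖τ‖) ^ 2 := by
      have : 0 ≤ |s| * (1 + ‖τ‖ + ‖τ‖ ^ 2) := by positivity
      nlinarith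
    have q3 : ‖c - s * (s - 1)‖ ≤ ‖c - s * (s - 1)‖ * (1 + ‖τ‖) ^ 2 :=
      le_mul_of_one_le_right (norm_nonneg _) (one_le_pow₀ (by linarith))
    calc (1 + |(p : ℝ)|) ^ (k + 1) * ‖moment τ V s‖
        = P * ((1 + |(p : ℝ)|) * ‖moment τ V s‖) := by rw [hP]; ring
      _ ≤ P * ((4 * Real.pi ^ 2 + ‖τ‖ ^ 2) * ‖moment τ V (s + 1)‖
          + 2 * ‖τ‖ * |s| * ‖moment τ V s‖ + ‖c - s * (s - 1)‖ * ‖moment τ V (s - 1)‖) := by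
          gcongr
      _ = (4 * Real.pi ^ 2 + ‖τ‖ ^ 2) * (P * ‖moment τ V (s + 1)‖)
          + 2 * ‖τ‖ * |s| * (P * ‖moment τ V s‖)
          + ‖c - s * (s - 1)‖ * (P * ‖moment τ V (s - 1)‖) := by ring
      _ ≤ (4 * Real.pi ^ 2 + 1) * (1 + ‖τ‖) ^ 2 * (C1 * (1 + ‖τ‖) ^ (2 * k))
          + 2 * |s| * (1 + ‖τ‖) ^ 2 * (C2 * (1 + ‖τ‖) ^ (2 * k))
          + ‖c - s * (s - 1)‖ * (1 + ‖τ‖) ^ 2 * (C3 * (1 + ‖τ‖) ^ (2 * k)) := by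
          gcongr
      _ = _ := by ring

/-! ### Uniform growth bounds -/

lemma one_add_rpow_le_exp {b ε : ℝ} (hb : 0 < b) (hε : 0 < ε) {y : ℝ} (hy : 0 < y) :
    (1 + y) ^ b ≤ (1 + b / ε) ^ b * Real.exp (ε * y) := by
  have h1 : 1 + y ≤ (1 + b / ε) * Real.exp (ε / b * y) := by
    have := Real.add_one_le_exp (ε / b * y)
    calc 1 + y ≤ (1 + b / ε) * (ε / b * y + 1) := by
          have e : (1 + b / ε) * (ε / b * y + 1) = 1 + y + b / ε + ε / b * y := by
            field_simp; ring
          rw [e]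
          have : 0 < b / ε := by positivity
          have : 0 < ε / b * y := by positivity
          linarith
      _ ≤ _ := by gcongr
  calc (1 + y) ^ b ≤ ((1 + b / ε) * Real.exp (ε / b * y)) ^ b := by gcongr
    _ = _ := by
      rw [Real.mul_rpow (by positivity) (by positivity), ← Real.exp_mul]
      congr 2
      field_simp

/-- The growth hypotheses at `0` and at `∞` merge into bounds valid on all of `(0,∞)`. -/
lemma growth_bounds {B CW ε : ℝ} (hB : 0 ≤ B) (hCW : 0 < CW) (hε : 0 < ε) {W W' : ℝ → ℂ}
    (h0 : ∀ y : ℝ, 0 < y → y ≤ 1 → ‖W y‖ + y * ‖W' y‖ ≤ CW * y ^ ((1 : ℝ) / 2))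
    (h1 : ∀ y : ℝ, 1 ≤ y → ‖W y‖ + ‖W' y‖ ≤ CW * (1 + y) ^ B) {y : ℝ} (hy : 0 < y) :
    ‖W y‖ ≤ CW * (1 + (B + 1) / ε) ^ (B + 1) * y ^ (1 / 2 : ℝ) * Real.exp (ε * y) ∧
    ‖W' y‖ ≤ CW * (1 + (B + 1) / ε) ^ (B + 1) * y ^ (-(1 / 2) : ℝ) * Real.exp (ε * y) := by
  have hE := one_add_rpow_le_exp (b := B + 1) (by linarith) hε hy
  have hone : 1 ≤ (1 + y) ^ (B + 1) := Real.one_le_rpow (by linarith) (by linarith)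
  have p1 := Real.rpow_pos_of_pos hy (1 / 2 : ℝ)
  have p2 := Real.rpow_pos_of_pos hy (-(1 / 2) : ℝ)
  have n1 := norm_nonneg (W y)
  have n2 := norm_nonneg (W' y)
  suffices H : ‖W y‖ ≤ CW * y ^ (1 / 2 : ℝ) * (1 + y) ^ (B + 1) ∧
      ‖W' y‖ ≤ CW * y ^ (-(1 / 2) : ℝ) * (1 + y) ^ (B + 1) by
    refine ⟨H.1.trans ?_, H.2.trans ?_⟩
    · calc _ ≤ CW * y ^ (1 / 2 : ℝ) * ((1 + (B + 1) / ε) ^ (B + 1) * Real.exp (ε * y)) := by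
            gcongr
        _ = _ := by ring
    · calc _ ≤ CW * y ^ (-(1 / 2) : ℝ) * ((1 + (B + 1) / ε) ^ (B + 1) * Real.exp (ε * y)) := by
            gcongr
        _ = _ := by ring
  rcases le_total y 1 with hy1 | hy1
  · have h := h0 y hy hy1
    have e : y ^ (1 / 2 : ℝ) = y * y ^ (-(1 / 2) : ℝ) := by
      conv_rhs => rw [mul_comm, ← Real.rpow_add_one hy.ne']
      norm_num
    constructor
    · have : ‖W y‖ ≤ CW * y ^ (1 / 2 : ℝ) := by nlinarith
      exact this.trans (le_mul_of_one_le_right (by positivity) hone)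
    · have : y * ‖W' y‖ ≤ y * (CW * y ^ (-(1 / 2) : ℝ)) := by
        calc y * ‖W' y‖ ≤ CW * y ^ (1 / 2 : ℝ) := by linarith
          _ = _ := by rw [e]; ring
      exact (le_of_mul_le_mul_left this hy).trans
        (le_mul_of_one_le_right (by positivity) hone)
  · have h := h1 y hy1
    have hb : (0 : ℝ) < (1 + y) ^ B := by positivity
    have e : (1 + y) ^ (B + 1) = (1 + y) ^ B * (1 + y) := Real.rpow_add_one (by positivity) B
    have r1 : 1 ≤ y ^ (1 / 2 : ℝ) := Real.one_le_rpow hy1 (by norm_num)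
    have r2 : 1 ≤ y ^ (-(1 / 2) : ℝ) * (1 + y) := by
      have : 1 ≤ y ^ (-(1 / 2) : ℝ) * y := by
        rw [← Real.rpow_add_one hy.ne']
        exact Real.one_le_rpow hy1 (by norm_num)
      nlinarith
    constructor
    · calc ‖W y‖ ≤ CW * 1 * ((1 + y) ^ B * 1) := by linarith
        _ ≤ CW * y ^ (1 / 2 : ℝ) * ((1 + y) ^ B * (1 + y)) := by gcongr; linarith
        _ = _ := by rw [e]
    · calc ‖W' y‖ ≤ CW * (1 + y) ^ B * 1 := by linarith
        _ ≤ CW * (1 + y) ^ B * (y ^ (-(1 / 2) : ℝ) * (1 + y)) := by gcongr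
        _ = _ := by rw [e]; ring

/-! ### The coefficient bound -/

theorem stmt8 (α : ℕ) (hα : 2 ≤ α) (δ : ℝ) (hδ : 0 < δ) (B : ℝ) (hB : 0 ≤ B)
    (CW : ℝ) (hCW : 0 < CW) (ν : ℂ) (hν : (ν ^ 2).im = 0) :
    ∃ C > (0 : ℝ), ∀ p : ℤ, p ≠ 0 → ∀ τ : ℂ, δ ≤ τ.re →
      ∀ W W' W'' : ℝ → ℂ,
        -- `W` is twice continuously differentiable on `(0,∞)`
        (∀ y ∈ Set.Ioi (0 : ℝ), HasDerivAt W (W' y) y) →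
        (∀ y ∈ Set.Ioi (0 : ℝ), HasDerivAt W' (W'' y) y) →
        ContinuousOn W'' (Set.Ioi (0 : ℝ)) →
        -- (i) the Whittaker-type differential equation
        (∀ y : ℝ, 0 < y → W'' y =
          ((((2 * Real.pi) ^ 2 : ℝ) : ℂ) - 4 * (Real.pi : ℂ) * (p : ℂ) / (y : ℂ) +
            (ν ^ 2 - 1 / 4) * (y : ℂ) ^ (-2 : ℤ)) * W y) →
        -- (ii) the normalization `∫₀^∞ |W(y)|² dy/y ≤ π`
        IntegrableOn (fun y : ℝ => ‖W y‖ ^ 2 / y) (Set.Ioi 0) →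
        (∫ y in Set.Ioi (0 : ℝ), ‖W y‖ ^ 2 / y) ≤ Real.pi →
        -- (iii) the growth bounds
        (∀ y : ℝ, 0 < y → y ≤ 1 → ‖W y‖ + y * ‖W' y‖ ≤ CW * y ^ ((1 : ℝ) / 2)) →
        (∀ y : ℝ, 1 ≤ y → ‖W y‖ + ‖W' y‖ ≤ CW * (1 + y) ^ B) →
        ‖(1 / (Real.pi : ℂ)) * ∫ y in Set.Ioi (0 : ℝ),
            (y : ℂ) ^ ((α : ℂ) + 1 / 2) * Complex.exp (-(τ * (y : ℂ))) *
              (starRingEnd ℂ) (W y) / (y : ℂ)‖ ≤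
          C * (1 + ‖τ‖) ^ (2 * α) * ((1 + |(p : ℝ)|) ^ α)⁻¹ := by
  set ε := δ / 2 with hεd
  have hε : 0 < ε := by positivity
  set M := CW * (1 + (B + 1) / ε) ^ (B + 1) with hM
  obtain ⟨C, hC, H⟩ := moment_bound (ν ^ 2 - 1 / 4) M hε α (α + 1 / 2) (by linarith)
  refine ⟨C, hC, fun p hp τ hτ W W' W'' hW hW' _ hode _ _ h0 h1 => ?_⟩
  have hc : (starRingEnd ℂ) (ν ^ 2) = ν ^ 2 := Complex.conj_eq_iff_im.mpr hν
  have sol : WhittakerSol (ν ^ 2 - 1 / 4) M ε p (fun y => star (W y)) (fun y => star (W' y)) := by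
    refine ⟨fun y hy => (hW y hy).star, fun y hy => ?_, fun y hy => ?_, fun y hy => ?_⟩
    · refine (hW' y hy).star.congr_deriv ?_
      rw [hode y hy]
      simp only [Complex.star_def, map_mul, map_add, map_sub, hc, Complex.conj_ofReal, map_div₀,
        map_intCast, map_one, map_ofNat, map_zpow₀]
      have hy0 : (y : ℂ) ≠ 0 := by exact_mod_cast (ne_of_gt hy)
      push_cast
      rw [zpow_neg]
      norm_cast
      push_cast
      ring
    · rw [norm_star]; exact (growth_bounds hB hCW hε h0 h1 hy).1
    · rw [norm_star]; exact (growth_bounds hB hCW hε h0 h1 hy).2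
  have key := H p hp τ (by rw [hεd]; linarith) _ _ sol
  have e : (∫ y in Set.Ioi (0 : ℝ),
      (y : ℂ) ^ ((α : ℂ) + 1 / 2) * Complex.exp (-(τ * (y : ℂ))) *
        (starRingEnd ℂ) (W y) / (y : ℂ)) = moment τ (fun y => star (W y)) (α + 1 / 2) := by
    refine setIntegral_congr_fun measurableSet_Ioi fun y hy => ?_
    have hy' : (0 : ℝ) < y := hy
    have hy0 : (y : ℂ) ≠ 0 := by exact_mod_cast hy'.ne'
    have e1 : (y : ℂ) ^ ((α : ℂ) + 1 / 2) = ((y ^ ((α : ℝ) + 1 / 2 - 1) : ℝ) : ℂ) * y := by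
      rw [← Complex.ofReal_mul, ← Real.rpow_add_one hy'.ne', Complex.ofReal_cpow hy'.le]
      congr 1
      push_cast
      ring
    simp only [momentFun, e1, Complex.star_def]
    field_simp
  rw [e, norm_mul]
  have hpi : ‖1 / (Real.pi : ℂ)‖ ≤ 1 := by
    rw [norm_div, norm_one, Complex.norm_real, Real.norm_of_nonneg Real.pi_pos.le]
    rw [div_le_one Real.pi_pos]
    linarith [Real.pi_gt_three]
  rw [← div_eq_mul_inv, le_div_iff₀ (by positivity)]
  calc _ ≤ 1 * ‖moment τ (fun y => star (W y)) (α + 1 / 2)‖ * (1 + |(p : ℝ)|) ^ α := by gcongr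
    _ = (1 + |(p : ℝ)|) ^ α * ‖moment τ (fun y => star (W y)) (α + 1 / 2)‖ := by ring
    _ ≤ _ := key
end
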